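/- arXiv:2007.03933 — 2 statements merged into one kernel-verified Lean document; each statement's English description precedes it below -/
import Mathlib

section
/- Let H be a 2-vertex-connected undirected graph with a DFS tree T rooted at r, let v be a vertex of H, and let e be a back-edge. Then {v,e} is a vertex-edge cut-pair of H if and only if there is a child c of v in T such that e joins a descendant of c to a proper ancestor of v and e is the only back-edge joining a descendant of c to a proper ancestor of v. -/
/-- A DFS tree of the graph `H`, rooted at `r`, given by a parent function:
it is a spanning tree (every vertex reaches the root by iterating the parent
function, and each non-root vertex is adjacent to its parent), and every edge
of `H` joins a vertex to one of its ancestors. -/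
structure DFSTree {V : Type*} (H : SimpleGraph V) (r : V) where
  par : V → V
  par_root : par r = r
  reaches_root : ∀ v : V, ∃ n : ℕ, par^[n] v = r
  par_adj : ∀ v : V, v ≠ r → H.Adj v (par v)
  edge_anc : ∀ x y : V, H.Adj x y → (∃ n : ℕ, par^[n] x = y) ∨ (∃ n : ℕ, par^[n] y = x)

namespace DFSTree

variable {V : Type*} {H : SimpleGraph V} {r : V} (T : DFSTree H r)

/-- `a` is an ancestor of `b` (every vertex is an ancestor of itself). -/
def Anc (a b : V) : Prop := ∃ n : ℕ, T.par^[n] b = a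

/-- `a` is a proper ancestor of `b`. -/
def PAnc (a b : V) : Prop := T.Anc a b ∧ a ≠ b

/-- `(x,y)` is a back-edge: an edge of `H` from `x` to an ancestor `y` of `x`
which is not the tree edge from `x` to its parent. -/
def BackEdge (x y : V) : Prop := H.Adj x y ∧ T.Anc y x ∧ T.par x ≠ y

/-- The set of descendants of `v` joined by a back-edge to a proper ancestor of `v`. -/
def MSet (v : V) : Set V := {x | T.Anc v x ∧ ∃ y, T.PAnc y v ∧ T.BackEdge x y}

/-- `m = M(v)`: `m` is the nearest common ancestor of all descendants of `v`
joined by a back-edge to a proper ancestor of `v`. -/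
def IsM (v m : V) : Prop :=
  (∀ x ∈ T.MSet v, T.Anc m x) ∧ ∀ m' : V, (∀ x ∈ T.MSet v, T.Anc m' x) → T.Anc m' m

/-- The set of descendants of `v` joined by a back-edge to a proper ancestor of `p(v)`. -/
def MpSet (v : V) : Set V := {x | T.Anc v x ∧ ∃ y, T.PAnc y (T.par v) ∧ T.BackEdge x y}

/-- `m = M_p(v)`: `m` is the nearest common ancestor of all descendants of `v`
joined by a back-edge to a proper ancestor of `p(v)`. -/
def IsMp (v m : V) : Prop :=
  (∀ x ∈ T.MpSet v, T.Anc m x) ∧ ∀ m' : V, (∀ x ∈ T.MpSet v, T.Anc m' x) → T.Anc m' m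

/-- `h = high(v)`: `h` is the deepest proper ancestor of `v` joined by a
back-edge to a descendant of `v`. -/
def IsHigh (v h : V) : Prop :=
  T.PAnc h v ∧ (∃ x, T.Anc v x ∧ T.BackEdge x h) ∧
    ∀ h' : V, T.PAnc h' v → (∃ x, T.Anc v x ∧ T.BackEdge x h') → T.Anc h' h

/-- `h = high_p(v)`: `h` is the deepest proper ancestor of `p(v)` joined by a
back-edge to a descendant of `v`. -/
def IsHighP (v h : V) : Prop :=
  T.PAnc h (T.par v) ∧ (∃ x, T.Anc v x ∧ T.BackEdge x h) ∧
    ∀ h' : V, T.PAnc h' (T.par v) → (∃ x, T.Anc v x ∧ T.BackEdge x h') → T.Anc h' h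

/-- `l = low(v)`: `l` is the proper ancestor of `v` nearest to the root joined
by a back-edge to a descendant of `v`. -/
def IsLow (v l : V) : Prop :=
  T.PAnc l v ∧ (∃ x, T.Anc v x ∧ T.BackEdge x l) ∧
    ∀ l' : V, T.PAnc l' v → (∃ x, T.Anc v x ∧ T.BackEdge x l') → T.Anc l l'

end DFSTree

/-- `{v, e}` is a vertex-edge cut-pair of `H`: `e` is an edge of `H` and deleting
both `v` (with its incident edges) and `e` disconnects `H`. -/
def VECutPair {V : Type*} (H : SimpleGraph V) (v : V) (e : Sym2 V) : Prop :=
  e ∈ H.edgeSet ∧ ¬ ((H.deleteEdges {e}).induce {u | u ≠ v}).Connected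

/-- `{e, e'}` is a cut-pair of `H`: `e` and `e'` are distinct edges of `H` whose
deletion disconnects `H`. -/
def ECutPair {V : Type*} (H : SimpleGraph V) (e e' : Sym2 V) : Prop :=
  e ∈ H.edgeSet ∧ e' ∈ H.edgeSet ∧ e ≠ e' ∧ ¬ (H.deleteEdges {e, e'}).Connected

/-- An undirected graph is 2-edge-connected if it is connected and has no bridge. -/
def TwoEdgeConnected {W : Type*} (G : SimpleGraph W) : Prop :=
  G.Connected ∧ ∀ e ∈ G.edgeSet, ¬ G.IsBridge e

/-- An undirected graph is 2-vertex-connected if it has at least three vertices,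
is connected, and deleting any single vertex leaves it connected. -/
def TwoVertexConnected {W : Type*} (G : SimpleGraph W) : Prop :=
  3 ≤ Nat.card W ∧ G.Connected ∧ ∀ v : W, (G.induce {u | u ≠ v}).Connected


namespace DFSTree
variable {V : Type*} {H : SimpleGraph V} {r : V} (T : DFSTree H r)

theorem iter_root (n : ℕ) : T.par^[n] r = r := Function.iterate_fixed T.par_root n

theorem anc_refl (a : V) : T.Anc a a := ⟨0, rfl⟩

theorem anc_par (a : V) : T.Anc (T.par a) a := ⟨1, rfl⟩

theorem anc_trans {a b c : V} (h : T.Anc a b) (h' : T.Anc b c) : T.Anc a c := by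
  obtain ⟨n, rfl⟩ := h
  obtain ⟨m, rfl⟩ := h'
  exact ⟨n + m, Function.iterate_add_apply _ _ _ _⟩

theorem anc_antisymm {a b : V} (h : T.Anc a b) (h' : T.Anc b a) : a = b := by
  obtain ⟨n, hn⟩ := h
  obtain ⟨m, hm⟩ := h'
  rcases Nat.eq_zero_or_pos n with h0 | h0
  · subst h0; exact hn.symm
  have hp : T.par^[m + n] b = b := by
    rw [Function.iterate_add_apply, hn, hm]
  obtain ⟨N, hN⟩ := T.reaches_root b
  have h1 : T.par^[(m + n) * N] b = b := by
    rw [Function.iterate_mul]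
    exact Function.iterate_fixed hp N
  have h2 : (m + n) * N = ((m + n) * N - N) + N := by
    have : N ≤ (m + n) * N := Nat.le_mul_of_pos_left N (by omega)
    omega
  rw [h2, Function.iterate_add_apply, hN, T.iter_root] at h1
  subst h1
  rw [T.iter_root] at hn
  exact hn.symm

theorem anc_chain {a b x : V} (h : T.Anc a x) (h' : T.Anc b x) : T.Anc a b ∨ T.Anc b a := by
  obtain ⟨n, rfl⟩ := h
  obtain ⟨m, rfl⟩ := h'
  rcases le_total n m with h | h
  · right
    refine ⟨m - n, ?_⟩
    rw [← Function.iterate_add_apply, Nat.sub_add_cancel h]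
  · left
    refine ⟨n - m, ?_⟩
    rw [← Function.iterate_add_apply, Nat.sub_add_cancel h]

theorem anc_step {a b : V} (h : T.Anc a b) (hne : a ≠ b) : T.Anc a (T.par b) := by
  obtain ⟨n, hn⟩ := h
  cases n with
  | zero => exact absurd hn.symm hne
  | succ n => exact ⟨n, hn⟩

theorem exists_child {v x : V} (h : T.Anc v x) (hne : x ≠ v) :
    ∃ c, T.par c = v ∧ c ≠ v ∧ T.Anc c x := by
  obtain ⟨n, hn⟩ := h
  induction n generalizing x with
  | zero => exact absurd hn hne
  | succ n ih =>
    by_cases hx : T.par x = v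
    · exact ⟨x, hx, hne, T.anc_refl x⟩
    · obtain ⟨c, h1, h2, h3⟩ := ih hx hn
      exact ⟨c, h1, h2, T.anc_trans h3 (T.anc_par x)⟩

/-- reachability avoiding `v` and `e` -/
def RR (H : SimpleGraph V) (v : V) (e : Sym2 V) (a b : V) : Prop :=
  ∃ (ha : a ≠ v) (hb : b ≠ v),
    ((H.deleteEdges {e}).induce {u | u ≠ v}).Reachable ⟨a, ha⟩ ⟨b, hb⟩

theorem RR.symm {v : V} {e : Sym2 V} {a b : V} (h : RR H v e a b) : RR H v e b a := by
  obtain ⟨ha, hb, h⟩ := h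
  exact ⟨hb, ha, h.symm⟩

theorem RR.trans {v : V} {e : Sym2 V} {a b c : V} (h : RR H v e a b) (h' : RR H v e b c) :
    RR H v e a c := by
  obtain ⟨ha, hb, h⟩ := h
  obtain ⟨hb', hc, h'⟩ := h'
  exact ⟨ha, hc, h.trans h'⟩

theorem RR.of_adj {v : V} {e : Sym2 V} {a b : V} (ha : a ≠ v) (hb : b ≠ v) (h : H.Adj a b)
    (he : s(a, b) ≠ e) : RR H v e a b := by
  refine ⟨ha, hb, SimpleGraph.Adj.reachable ?_⟩
  simp [SimpleGraph.deleteEdges_adj, h, he]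

theorem up {v x y : V} (hbe : T.BackEdge x y) {a b : V} (h : T.Anc a b) (hb : b ≠ v)
    (hn : ¬ (T.Anc a v ∧ T.Anc v b)) : RR H v s(x, y) b a := by
  obtain ⟨n, h⟩ := h
  induction n generalizing b with
  | zero => obtain rfl : b = a := h; exact ⟨hb, hb, SimpleGraph.Reachable.refl _⟩
  | succ n ih =>
    have h' : T.par^[n] (T.par b) = a := h
    by_cases hr : b = r
    · subst hr
      rw [T.par_root] at h'
      exact ih hb hn h'
    have hv : T.par b ≠ v := by
      rintro rfl
      exact hn ⟨⟨n, h'⟩, T.anc_par b⟩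
    refine RR.trans (RR.of_adj hb hv (T.par_adj b hr) ?_)
      (ih hv (fun hh => hn ⟨hh.1, T.anc_trans hh.2 (T.anc_par b)⟩) h')
    intro he
    rcases Sym2.eq_iff.1 he with ⟨h1, h2⟩ | ⟨h1, h2⟩
    · subst h1; exact hbe.2.2 h2
    · subst h1
      exact hbe.1.ne (T.anc_antisymm ⟨1, h2⟩ hbe.2.1)

end DFSTree

open DFSTree in
theorem stmt_10 {V : Type*} [Fintype V] (H : SimpleGraph V) (r : V)
    (T : DFSTree H r) (hH : TwoVertexConnected H) (v x y : V)
    (hbe : T.BackEdge x y) :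
    VECutPair H v s(x, y) ↔
      ∃ c : V, T.par c = v ∧ c ≠ r ∧ T.Anc c x ∧ T.PAnc y v ∧
        ∀ x' y' : V, T.BackEdge x' y' → T.Anc c x' → T.PAnc y' v →
          s(x', y') = s(x, y) := by
  constructor
  · rintro ⟨-, hnc⟩
    have hcon := hH.2.2 v
    have key : x ≠ v ∧ y ≠ v ∧ ¬ RR H v s(x, y) x y := by
      by_contra hk
      apply hnc
      have hne := hcon.nonempty
      refine ⟨?_⟩
      intro a b
      obtain ⟨w⟩ := hcon.preconnected a b
      induction w with
      | nil => exact SimpleGraph.Reachable.refl _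
      | @cons p q _ hpq _ ih =>
        refine SimpleGraph.Reachable.trans ?_ ih
        have hadj : H.Adj p.1 q.1 := hpq
        have : RR H v s(x, y) p.1 q.1 := by
          by_cases he : s(p.1, q.1) = s(x, y)
          · have hp := p.2
            have hq := q.2
            simp only [Set.mem_ofPred_eq] at hp hq
            rcases Sym2.eq_iff.1 he with ⟨h1, h2⟩ | ⟨h1, h2⟩
            · rw [h1] at hp ⊢; rw [h2] at hq ⊢
              by_contra h3; exact hk ⟨hp, hq, h3⟩
            · rw [h1] at hp ⊢; rw [h2] at hq ⊢
              by_contra h3; exact hk ⟨hq, hp, fun h => h3 h.symm⟩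
          · exact RR.of_adj p.2 q.2 hadj he
        exact this.2.2
    obtain ⟨hxv, hyv, hR⟩ := key
    have hmid : T.Anc y v ∧ T.Anc v x := by
      by_contra hn
      exact hR (T.up hbe hbe.2.1 hxv hn)
    obtain ⟨c, hc1, hc2, hc3⟩ := T.exists_child hmid.2 hxv
    have hcv : ¬ T.Anc c v := fun h => hc2 (T.anc_antisymm h ⟨1, hc1⟩)
    refine ⟨c, hc1, ?_, hc3, ⟨hmid.1, hyv⟩, ?_⟩
    · rintro rfl
      exact hc2 (T.par_root.symm.trans hc1)
    intro x' y' hb' hcx' hy'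
    by_contra he
    apply hR
    have hx'v : x' ≠ v := by rintro rfl; exact hcv hcx'
    have e1 : RR H v s(x, y) x c := T.up hbe hc3 hxv (fun h => hcv h.1)
    have e2 : RR H v s(x, y) x' c := T.up hbe hcx' hx'v (fun h => hcv h.1)
    have e3 : RR H v s(x, y) x' y' := RR.of_adj hx'v hy'.2 hb'.1 he
    have e4 : RR H v s(x, y) y' y := by
      rcases T.anc_chain hy'.1 hmid.1 with h | h
      · exact (T.up hbe h hyv (fun h => hyv (T.anc_antisymm hmid.1 h.2))).symm
      · exact T.up hbe h hy'.2 (fun h => hy'.2 (T.anc_antisymm hy'.1 h.2))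
    exact e1.trans (e2.symm.trans (e3.trans e4))
  · rintro ⟨c, hc1, hcr, hcx, hyv, huniq⟩
    refine ⟨hbe.1, fun hcon => ?_⟩
    have hcv : ¬ T.Anc c v := by
      intro h
      have h1 : c = v := T.anc_antisymm h ⟨1, hc1⟩
      have h2 := T.par_adj c hcr
      rw [hc1, h1] at h2
      exact h2.ne rfl
    have hxv : x ≠ v := by rintro rfl; exact hcv hcx
    have hcy : ¬ T.Anc c y := fun h => hcv (T.anc_trans h hyv.1)
    obtain ⟨w⟩ := hcon.preconnected ⟨x, hxv⟩ ⟨y, hyv.2⟩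
    have inv : ∀ (a b : {u | u ≠ v})
        (w : ((H.deleteEdges {s(x, y)}).induce {u | u ≠ v}).Walk a b),
        T.Anc c a.1 → T.Anc c b.1 := by
      intro a b w
      induction w with
      | nil => exact id
      | @cons p q _ hpq _ ih =>
        intro hp
        apply ih
        have hadj : H.Adj p.1 q.1 ∧ s(p.1, q.1) ≠ s(x, y) := by
          have h : (H.deleteEdges {s(x, y)}).Adj p.1 q.1 := hpq
          rwa [SimpleGraph.deleteEdges_adj, Set.mem_singleton_iff] at h
        by_contra hq
        rcases T.edge_anc _ _ hadj.1 with h | h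
        · have hqp : T.Anc q.1 p.1 := h
          have hqc : T.Anc q.1 c := (T.anc_chain hqp hp).resolve_right hq
          have hqv : T.Anc q.1 v := by
            have h3 := T.anc_step hqc (fun h => hq (h ▸ T.anc_refl _))
            rwa [hc1] at h3
          refine hadj.2 (huniq _ _ ⟨hadj.1, hqp, ?_⟩ hp ⟨hqv, q.2⟩)
          intro hpar
          by_cases hpc : c = p.1
          · rw [← hpc, hc1] at hpar
            exact q.2 hpar.symm
          · exact hq (hpar ▸ T.anc_step hp hpc)
        · exact hq (T.anc_trans hp h)
    exact hcy (inv _ _ w hcx)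
end

section
/- Let H be a 2-edge-connected undirected graph with a DFS tree T rooted at r, let e be a back-edge, and let u be a vertex different from r. Then {e,(u,p(u))} is a cut-pair of H if and only if e joins a descendant of u to a proper ancestor of u and e is the only back-edge joining a descendant of u to a proper ancestor of u. -/
namespace DFSTree

theorem anc_refl' {V : Type*} {H : SimpleGraph V} {r : V} (T : DFSTree H r) (a : V) :
    T.Anc a a := ⟨0, rfl⟩

theorem anc_trans' {V : Type*} {H : SimpleGraph V} {r : V} (T : DFSTree H r) {a b c : V}
    (h1 : T.Anc a b) (h2 : T.Anc b c) : T.Anc a c := by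
  obtain ⟨n, rfl⟩ := h1
  obtain ⟨m, rfl⟩ := h2
  exact ⟨n + m, Function.iterate_add_apply _ _ _ _⟩

theorem iter_root_s16 {V : Type*} {H : SimpleGraph V} {r : V} (T : DFSTree H r) (n : ℕ) :
    T.par^[n] r = r := Function.iterate_fixed T.par_root n

theorem anc_antisymm' {V : Type*} {H : SimpleGraph V} {r : V} (T : DFSTree H r) {a b : V}
    (h1 : T.Anc a b) (h2 : T.Anc b a) : a = b := by
  obtain ⟨n, hn⟩ := h1
  obtain ⟨m, hm⟩ := h2
  have hp : T.par^[m + n] b = b := by rw [Function.iterate_add_apply, hn, hm]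
  rcases Nat.eq_zero_or_pos n with h0 | h0
  · subst h0; exact hn.symm
  obtain ⟨N, hN⟩ := T.reaches_root b
  have hk : T.par^[(m + n) * N] b = b := by
    rw [Function.iterate_mul]; exact Function.iterate_fixed hp N
  have hle : N ≤ (m + n) * N := Nat.le_mul_of_pos_left N (by omega)
  obtain ⟨k, hk'⟩ := Nat.exists_eq_add_of_le' hle
  rw [hk', Function.iterate_add_apply, hN, T.iter_root_s16] at hk
  subst hk
  rw [T.iter_root_s16] at hn
  exact hn.symm

theorem anc_total' {V : Type*} {H : SimpleGraph V} {r : V} (T : DFSTree H r) {a b c : V}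
    (h1 : T.Anc a c) (h2 : T.Anc b c) : T.Anc a b ∨ T.Anc b a := by
  obtain ⟨n, rfl⟩ := h1
  obtain ⟨m, rfl⟩ := h2
  rcases le_total n m with h | h
  · right
    obtain ⟨k, rfl⟩ := Nat.exists_eq_add_of_le' h
    exact ⟨k, (Function.iterate_add_apply _ _ _ _).symm⟩
  · left
    obtain ⟨k, rfl⟩ := Nat.exists_eq_add_of_le' h
    exact ⟨k, (Function.iterate_add_apply _ _ _ _).symm⟩

theorem anc_cases {V : Type*} {H : SimpleGraph V} {r : V} (T : DFSTree H r) {u a : V}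
    (h : T.Anc u a) : a = u ∨ T.Anc u (T.par a) := by
  obtain ⟨n, hn⟩ := h
  cases n with
  | zero => exact Or.inl hn
  | succ k => exact Or.inr ⟨k, by rwa [Function.iterate_succ_apply] at hn⟩

theorem crossing {V : Type*} {H : SimpleGraph V} {r : V} (T : DFSTree H r) {u a b : V}
    (hab : H.Adj a b) (ha : T.Anc u a) (hb : ¬ T.Anc u b) :
    s(a, b) = s(u, T.par u) ∨ (T.BackEdge a b ∧ T.PAnc b u) := by
  rcases T.edge_anc a b hab with h | h
  · by_cases hp : T.par a = b
    · rcases T.anc_cases ha with h' | h'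
      · subst h'; left; rw [hp]
      · rw [hp] at h'; exact absurd h' hb
    · right
      refine ⟨⟨hab, h, hp⟩, ?_, ?_⟩
      · rcases T.anc_total' ha h with h' | h'
        · exact absurd h' hb
        · exact h'
      · rintro rfl; exact hb (T.anc_refl' _)
  · exact absurd (T.anc_trans' ha h) hb

/-- If `G` has no edge leaving the descendants of `u`, then it is not connected. -/
theorem exists_cross {V : Type*} {H : SimpleGraph V} {r : V} (T : DFSTree H r) {u : V}
    (hu : u ≠ r) (G : SimpleGraph V) (hG : G.Reachable u r) :
    ∃ a b, G.Adj a b ∧ T.Anc u a ∧ ¬ T.Anc u b := by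
  by_contra! hc
  have key : ∀ v, G.Reachable u v → T.Anc u v := by
    rintro v ⟨w⟩
    have : ∀ p q (w : G.Walk p q), T.Anc u p → T.Anc u q := by
      intro p q w
      induction w with
      | nil => exact id
      | cons h _ ih => exact fun hp => ih (hc _ _ h hp)
    exact this _ _ w (T.anc_refl' u)
  exact hu (T.anc_antisymm' (key r hG) (T.reaches_root u))

theorem tree_not_back {V : Type*} {H : SimpleGraph V} {r : V} (T : DFSTree H r) {x y v : V}
    (hbe : T.BackEdge x y) : s(v, T.par v) ≠ s(x, y) := by
  intro h
  rw [Sym2.eq_iff] at h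
  rcases h with ⟨h1, h2⟩ | ⟨h1, h2⟩
  · subst h1; exact hbe.2.2 h2
  · have : T.Anc x y := ⟨1, by subst h1; exact h2⟩
    exact hbe.1.ne (T.anc_antisymm' this hbe.2.1)

theorem tree_inj {V : Type*} {H : SimpleGraph V} {r : V} (T : DFSTree H r) {u v : V}
    (h : s(v, T.par v) = s(u, T.par u)) : v = u := by
  rw [Sym2.eq_iff] at h
  rcases h with ⟨h1, _⟩ | ⟨h1, h2⟩
  · exact h1
  · exact T.anc_antisymm' ⟨1, h1.symm⟩ ⟨1, h2⟩

theorem reach {V : Type*} {H : SimpleGraph V} {r : V} (T : DFSTree H r) {x y u : V}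
    (hbe : T.BackEdge x y) (v : V) :
    (T.Anc u v → (H.deleteEdges {s(x, y), s(u, T.par u)}).Reachable v u) ∧
    (¬ T.Anc u v → (H.deleteEdges {s(x, y), s(u, T.par u)}).Reachable v r) := by
  obtain ⟨n, hn⟩ := T.reaches_root v
  have step : ∀ w, w ≠ r → w ≠ u →
      (H.deleteEdges {s(x, y), s(u, T.par u)}).Adj w (T.par w) := by
    intro w h1 h2
    rw [SimpleGraph.deleteEdges_adj]
    refine ⟨T.par_adj w h1, ?_⟩
    rintro (h | h)
    · exact T.tree_not_back hbe h
    · exact h2 (T.tree_inj h)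
  induction n generalizing v with
  | zero =>
    have hn' : v = r := hn
    subst hn'
    refine ⟨?_, fun _ => SimpleGraph.Reachable.refl _⟩
    rintro ⟨k, hk⟩
    rw [T.iter_root_s16] at hk
    subst hk; exact SimpleGraph.Reachable.refl _
  | succ n ih =>
    obtain ⟨ih1, ih2⟩ := ih (T.par v) hn
    by_cases hvu : v = u
    · subst hvu
      exact ⟨fun _ => SimpleGraph.Reachable.refl _, fun h => absurd (T.anc_refl' _) h⟩
    by_cases hvr : v = r
    · subst hvr
      rw [T.par_root] at ih1 ih2
      exact ⟨ih1, ih2⟩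
    have hs := (step v hvr hvu).reachable
    refine ⟨fun h => hs.trans (ih1 ?_), fun h => hs.trans (ih2 ?_)⟩
    · exact (T.anc_cases h).resolve_left hvu
    · exact fun h' => h (T.anc_trans' h' ⟨1, rfl⟩)

end DFSTree

theorem stmt_16 {V : Type*} [Fintype V] (H : SimpleGraph V) (r : V)
    (T : DFSTree H r) (hH : TwoEdgeConnected H) (x y u : V)
    (hbe : T.BackEdge x y) (hu : u ≠ r) :
    ECutPair H s(x, y) s(u, T.par u) ↔
      (T.Anc u x ∧ T.PAnc y u ∧
        ∀ x' y' : V, T.BackEdge x' y' → T.Anc u x' → T.PAnc y' u →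
          s(x', y') = s(x, y)) := by
  constructor
  · rintro ⟨-, -, -, hnc⟩
    have huniq : ∀ x' y' : V, T.BackEdge x' y' → T.Anc u x' → T.PAnc y' u →
          s(x', y') = s(x, y) := by
      intro x' y' hb hx' hy'
      by_contra hne
      apply hnc
      have hy'' : ¬ T.Anc u y' := fun h => hy'.2 (T.anc_antisymm' hy'.1 h)
      have hadj : (H.deleteEdges {s(x, y), s(u, T.par u)}).Adj x' y' := by
        rw [SimpleGraph.deleteEdges_adj]
        refine ⟨hb.1, ?_⟩
        rintro (h | h)
        · exact hne h
        · exact T.tree_not_back hb (Eq.symm h)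
      have hur : (H.deleteEdges {s(x, y), s(u, T.par u)}).Reachable u r :=
        (((T.reach hbe x').1 hx').symm.trans hadj.reachable).trans ((T.reach hbe y').2 hy'')
      have hall : ∀ v, (H.deleteEdges {s(x, y), s(u, T.par u)}).Reachable v r := by
        intro v
        by_cases hv : T.Anc u v
        · exact ((T.reach hbe v).1 hv).trans hur
        · exact (T.reach hbe v).2 hv
      haveI : Nonempty V := ⟨r⟩
      exact ⟨fun a b => (hall a).trans (hall b).symm⟩
    have hadj := T.par_adj u hu
    have hbr := hH.2 s(u, T.par u) hadj
    have hreach : (H.deleteEdges {s(u, T.par u)}).Reachable u r := by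
      have h1 : (H.deleteEdges {s(u, T.par u)}).Reachable u (T.par u) := by
        by_contra hcon
        apply hbr
        rw [SimpleGraph.isBridge_iff]
        exact hcon
      have hnp : ¬ T.Anc u (T.par u) := fun h =>
        hadj.ne (T.anc_antisymm' h ⟨1, rfl⟩)
      refine h1.trans (((T.reach hbe _).2 hnp).mono ?_)
      exact SimpleGraph.deleteEdges_anti (by simp)
    obtain ⟨a, b, hab, ha, hb⟩ := T.exists_cross hu _ hreach
    rw [SimpleGraph.deleteEdges_adj] at hab
    rcases T.crossing hab.1 ha hb with h | ⟨h1, h2⟩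
    · exact absurd h hab.2
    · have he := huniq a b h1 ha h2
      rw [Sym2.eq_iff] at he
      rcases he with ⟨rfl, rfl⟩ | ⟨rfl, rfl⟩
      · exact ⟨ha, h2, huniq⟩
      · exact absurd (T.anc_antisymm' h1.2.1 hbe.2.1) h1.1.ne'
  · rintro ⟨hx, hy, huniq⟩
    refine ⟨hbe.1, T.par_adj u hu, (T.tree_not_back hbe).symm, ?_⟩
    intro hc
    obtain ⟨a, b, hab, ha, hb⟩ := T.exists_cross hu _ (hc.preconnected u r)
    rw [SimpleGraph.deleteEdges_adj] at hab
    rcases T.crossing hab.1 ha hb with h | ⟨h1, h2⟩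
    · exact hab.2 (Or.inr h)
    · exact hab.2 (Or.inl (huniq a b h1 ha h2))
end
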